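/- arXiv:2505.16155 — 2 statements merged into one kernel-verified Lean document; each statement's English description precedes it below -/
import Mathlib

section
/- Let A be a Hopf algebra over a field k, let r ∈ A be a grouplike element, and let δ : A → A be a k-linear map satisfying Δ(δ(a)) = δ(a₍₁₎) ⊗ a₍₂₎ + r a₍₁₎ ⊗ δ(a₍₂₎) for all a ∈ A. Then δ(a₍₁₎) S(a₍₂₎) + r a₍₁₎ S(δ(a₍₂₎)) = 0 for all a ∈ A. -/
open TensorProduct

/-!
Write `*` for the convolution product. If `Δ ∘ δ = (δ ⊗ ψ + φ ⊗ δ) ∘ Δ`, then precomposition with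
`δ` obeys a Leibniz rule: `(f * g) ∘ δ = (f ∘ δ) * (g ∘ ψ) + (f ∘ φ) * (g ∘ δ)`. When `φ` and `ψ`
preserve the counit `ε`, which is the convolution unit, `f = g = ε` gives `ε ∘ δ = ε ∘ δ + ε ∘ δ`,
so `ε ∘ δ = 0`. Then `f = id` and `g = S`, for which `f * g` is the unit, give
`0 = δ * (S ∘ ψ) + φ * (S ∘ δ)`. The theorem is the case where `φ` is left multiplication by `r`
and `ψ` is the identity.
-/

open Coalgebra HopfAlgebra WithConv

/-- `δ` is a `(φ, ψ)`-skew coderivation: `Δ(δ c) = δ(c₍₁₎) ⊗ ψ(c₍₂₎) + φ(c₍₁₎) ⊗ δ(c₍₂₎)`.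
This is the dual of a skew derivation; no compatibility of `φ` and `ψ` with the comultiplication is
built in. -/
def IsSkewCoderivation {R C D : Type*} [CommSemiring R] [AddCommMonoid C] [Module R C]
    [CoalgebraStruct R C] [AddCommMonoid D] [Module R D] [CoalgebraStruct R D]
    (φ ψ δ : C →ₗ[R] D) : Prop :=
  ∀ c, comul (δ c) = map δ ψ (comul c : C ⊗[R] C) + map φ δ (comul c : C ⊗[R] C)

namespace IsSkewCoderivation

theorem convMul_comp {R B C D : Type*} [CommSemiring R]
    [NonUnitalNonAssocSemiring B] [Module R B] [SMulCommClass R B B] [IsScalarTower R B B]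
    [AddCommMonoid C] [Module R C] [CoalgebraStruct R C]
    [AddCommMonoid D] [Module R D] [CoalgebraStruct R D]
    {φ ψ δ : C →ₗ[R] D} (hδ : IsSkewCoderivation φ ψ δ) (f g : D →ₗ[R] B) :
    toConv ((toConv f * toConv g).ofConv ∘ₗ δ) =
      toConv (f ∘ₗ δ) * toConv (g ∘ₗ ψ) + toConv (f ∘ₗ φ) * toConv (g ∘ₗ δ) := by
  ext c
  simp [LinearMap.convMul_def, hδ c, map_map]

theorem counit_comp_eq_zero {R C D : Type*} [CommRing R]
    [AddCommMonoid C] [Module R C] [Coalgebra R C]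
    [AddCommMonoid D] [Module R D] [Coalgebra R D]
    {φ ψ δ : C →ₗ[R] D} (hδ : IsSkewCoderivation φ ψ δ)
    (hφ : counit ∘ₗ φ = counit (R := R)) (hψ : counit ∘ₗ ψ = counit (R := R)) :
    counit ∘ₗ δ = (0 : C →ₗ[R] R) := by
  have counit_mul_counit :
      toConv (counit : D →ₗ[R] R) * toConv counit = toConv counit := mul_one _
  have counit_comp_eq_add_self : toConv (counit ∘ₗ δ : C →ₗ[R] R) =
      toConv (counit ∘ₗ δ) + toConv (counit ∘ₗ δ) :=
    calc toConv (counit ∘ₗ δ : C →ₗ[R] R)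
      _ = toConv (counit ∘ₗ δ) * toConv counit + toConv counit * toConv (counit ∘ₗ δ) := by
        simpa only [counit_mul_counit, ofConv_toConv, hφ, hψ] using hδ.convMul_comp counit counit
      _ = toConv (counit ∘ₗ δ) + toConv (counit ∘ₗ δ) :=
        congrArg₂ (· + ·) (mul_one _) (one_mul _)
  exact toConv_injective (left_eq_add.mp counit_comp_eq_add_self)

end IsSkewCoderivation

theorem delta_antipode_relation_general {R C A : Type*} [CommRing R]
    [AddCommMonoid C] [Module R C] [Coalgebra R C] [Semiring A] [HopfAlgebra R A]
    {φ ψ δ : C →ₗ[R] A} (hδ : IsSkewCoderivation φ ψ δ)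
    (hφ : counit ∘ₗ φ = counit (R := R)) (hψ : counit ∘ₗ ψ = counit (R := R)) :
    toConv δ * toConv (antipode R ∘ₗ ψ) + toConv φ * toConv (antipode R ∘ₗ δ) = 0 :=
  calc toConv δ * toConv (antipode R ∘ₗ ψ) + toConv φ * toConv (antipode R ∘ₗ δ)
    _ = toConv (ofConv (toConv LinearMap.id * toConv (antipode R)) ∘ₗ δ) :=
      (hδ.convMul_comp LinearMap.id (antipode R)).symm
    _ = toConv (Algebra.linearMap R A ∘ₗ counit ∘ₗ δ) := by
      rw [LinearMap.id_mul_antipode, LinearMap.convOne_def, ofConv_toConv, LinearMap.comp_assoc]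
    _ = 0 := by rw [hδ.counit_comp_eq_zero hφ hψ, LinearMap.comp_zero, toConv_zero]

/-- Let `r` be a grouplike element of a Hopf algebra `A` over a field `k` and
let `δ : A → A` be a `k`-linear map satisfying
`Δ(δ a) = δ(a₍₁₎) ⊗ a₍₂₎ + r a₍₁₎ ⊗ δ(a₍₂₎)`.  Then
`δ(a₍₁₎) S(a₍₂₎) + r a₍₁₎ S(δ(a₍₂₎)) = 0` for all `a ∈ A`. -/
theorem delta_antipode_relation
    {k A : Type*} [Field k] [Ring A] [HopfAlgebra k A]
    (r : A)
    (hr : Coalgebra.comul (R := k) r = r ⊗ₜ[k] r)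
    (hrε : Coalgebra.counit (R := k) r = 1)
    (δ : A →ₗ[k] A)
    (hδ : ∀ a : A, Coalgebra.comul (R := k) (δ a) =
      (TensorProduct.map δ (LinearMap.id : A →ₗ[k] A)) (Coalgebra.comul (R := k) a) +
      (TensorProduct.map (LinearMap.mulLeft k r) δ) (Coalgebra.comul (R := k) a)) :
    ∀ a : A,
      (LinearMap.mul' k A) ((TensorProduct.map δ (HopfAlgebra.antipode (R := k)))
          (Coalgebra.comul (R := k) a)) +
      (LinearMap.mul' k A) ((TensorProduct.map (LinearMap.mulLeft k r)
          ((HopfAlgebra.antipode (R := k)) ∘ₗ δ)) (Coalgebra.comul (R := k) a)) = 0 := by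
  have counit_comp_mulLeft : counit ∘ₗ LinearMap.mulLeft k r = counit (R := k) := by
    ext a
    simp [hrε]
  have hδ' : IsSkewCoderivation (LinearMap.mulLeft k r) LinearMap.id δ := hδ
  exact LinearMap.congr_fun <| congrArg ofConv <|
    delta_antipode_relation_general hδ' counit_comp_mulLeft rfl
end

section
/- Let A be a Hopf algebra over a field k, let r ∈ A be a grouplike element, let χ : A → k be a character, and define τ : A → A by τ(a) = χ(a₍₁₎) a₍₂₎. Assume χ(a₍₁₎) a₍₂₎ = r a₍₁₎ S(r) χ(a₍₂₎) for all a ∈ A. Then τ(S(τ(a))) = r S(a) S(r) for all a ∈ A; equivalently S(a)·S(r) = S(r)·τ(S(τ(a))). -/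
open TensorProduct

/-!
Write `*` for convolution of linear maps and regard `χ` as a map `A → A` through the unit of `A`,
so that `τ = χ * id`. Since `χ` takes scalar values, linearity of `τ ∘ S` gives
`τ ∘ S ∘ τ = χ * (τ ∘ S)`. The map `τ` is an algebra homomorphism, so `τ ∘ S` is its convolution
inverse. If moreover `τ = φ * χ` with `φ` an algebra homomorphism, then
`φ * (τ ∘ S ∘ τ) = φ * χ * (τ ∘ S) = τ * (τ ∘ S) = 1`; but the convolution inverse of `φ` is
`φ ∘ S`, hence `τ ∘ S ∘ τ = φ ∘ S`. The theorem is the case where `φ` is conjugation by `r`.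
-/

open Coalgebra HopfAlgebra WithConv

theorem convMul_scalar_apply {R A C : Type*} [CommSemiring R] [Semiring A] [Algebra R A]
    [AddCommMonoid C] [Module R C] [CoalgebraStruct R C] (f : C →ₗ[R] A) (c : C →ₗ[R] R) (x : C) :
    (toConv f * toConv (Algebra.linearMap R A ∘ₗ c)) x =
      TensorProduct.rid R A (TensorProduct.map f c (comul x)) := by
  simp [← (ℛ R x).eq, Algebra.smul_def, Algebra.commutes]

section AlgHomConvolution

variable {R A B : Type*} [CommSemiring R] [Semiring A] [HopfAlgebra R A] [Semiring B] [Algebra R B]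

theorem algHom_convMul_comp_antipode (f : A →ₐ[R] B) :
    toConv f.toLinearMap * toConv (f.toLinearMap ∘ₗ antipode R) = 1 := by
  ext x
  simp [(ℛ R x).convMul_apply, ← map_mul, ← map_sum,
    sum_mul_antipode_eq_algebraMap_counit (ℛ R x)]

theorem comp_antipode_convMul_algHom (f : A →ₐ[R] B) :
    toConv (f.toLinearMap ∘ₗ antipode R) * toConv f.toLinearMap = 1 := by
  ext x
  simp [(ℛ R x).convMul_apply, ← map_mul, ← map_sum,
    sum_antipode_mul_eq_algebraMap_counit (ℛ R x)]

end AlgHomConvolution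

section LeftWinding

variable {R A : Type*} [CommSemiring R] [Semiring A]

/-- The left winding endomorphism `a ↦ χ(a₍₁₎) a₍₂₎` of a bialgebra attached to a character `χ`,
bundled as an algebra homomorphism. -/
noncomputable def leftWinding [Bialgebra R A] (χ : A →ₐ[R] R) : A →ₐ[R] A :=
  ((Algebra.TensorProduct.lid R A).toAlgHom.comp
    (Algebra.TensorProduct.map χ (AlgHom.id R A))).comp (Bialgebra.comulAlgHom R A)

theorem comp_leftWinding_eq_convMul [Bialgebra R A] {B : Type*} [Semiring B] [Algebra R B]
    (χ : A →ₐ[R] R) (g : A →ₗ[R] B) :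
    toConv (g ∘ₗ (leftWinding χ).toLinearMap) =
      toConv (Algebra.linearMap R B ∘ₗ χ.toLinearMap) * toConv g := by
  ext a
  simp [leftWinding, ← (ℛ R a).eq, ← Algebra.smul_def]

theorem tau_antipode_conjugation_general [HopfAlgebra R A] (χ : A →ₐ[R] R) (φ : A →ₐ[R] A)
    (hφ : ∀ a : A, leftWinding χ a =
      TensorProduct.rid R A (TensorProduct.map φ.toLinearMap χ.toLinearMap (comul a))) (a : A) :
    leftWinding χ (antipode R (leftWinding χ a)) = φ (antipode R a) := by
  let τ : A →ₗ[R] A := (leftWinding χ).toLinearMap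
  let X : WithConv (A →ₗ[R] A) := toConv (Algebra.linearMap R A ∘ₗ χ.toLinearMap)
  have tau_eq : toConv τ = toConv φ.toLinearMap * X := by
    ext b
    exact (hφ b).trans (convMul_scalar_apply φ.toLinearMap χ.toLinearMap b).symm
  have right_inv : toConv φ.toLinearMap * toConv ((τ ∘ₗ antipode R) ∘ₗ τ) = 1 := by
    calc toConv φ.toLinearMap * toConv ((τ ∘ₗ antipode R) ∘ₗ τ)
      _ = toConv φ.toLinearMap * (X * toConv (τ ∘ₗ antipode R)) := by
        rw [comp_leftWinding_eq_convMul]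
      _ = toConv τ * toConv (τ ∘ₗ antipode R) := by rw [← mul_assoc, tau_eq]
      _ = 1 := algHom_convMul_comp_antipode (leftWinding χ)
  have inv_unique : toConv (φ.toLinearMap ∘ₗ antipode R) = toConv ((τ ∘ₗ antipode R) ∘ₗ τ) :=
    left_inv_eq_right_inv (comp_antipode_convMul_algHom φ) right_inv
  exact LinearMap.congr_fun (congrArg ofConv inv_unique.symm) a

end LeftWinding

/-- Let `r` be a grouplike element of a Hopf algebra `A` over a field `k`,
`χ : A → k` a character, and define `τ a = χ(a₍₁₎) a₍₂₎`.  Assume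
`χ(a₍₁₎) a₍₂₎ = r a₍₁₎ S(r) χ(a₍₂₎)` for all `a`.  Then
`τ(S(τ a)) = r S(a) S(r)`; equivalently `S(a) S(r) = S(r) τ(S(τ a))`. -/
theorem tau_antipode_conjugation
    {k A : Type*} [Field k] [Ring A] [HopfAlgebra k A]
    (r : A)
    (hr : Coalgebra.comul (R := k) r = r ⊗ₜ[k] r)
    (hrε : Coalgebra.counit (R := k) r = 1)
    (χ : A →ₐ[k] k)
    -- `Ad_r : a ↦ r * a * S(r)` as a linear map
    (Ad : A →ₗ[k] A)
    (hAd : ∀ a : A, Ad a = r * a * HopfAlgebra.antipode (R := k) r)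
    -- `τ a = χ(a₍₁₎) a₍₂₎` as a linear map
    (τ : A →ₗ[k] A)
    (hτ : ∀ a : A, τ a = (TensorProduct.lid k A)
      ((LinearMap.rTensor A χ.toLinearMap) (Coalgebra.comul (R := k) a)))
    -- assumption: `χ(a₍₁₎) a₍₂₎ = r a₍₁₎ S(r) χ(a₍₂₎)`
    (hcomm : ∀ a : A, τ a = (TensorProduct.rid k A)
      ((TensorProduct.map Ad χ.toLinearMap) (Coalgebra.comul (R := k) a))) :
    ∀ a : A,
      τ (HopfAlgebra.antipode (R := k) (τ a)) =
        r * HopfAlgebra.antipode (R := k) a * HopfAlgebra.antipode (R := k) r ∧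
      HopfAlgebra.antipode (R := k) a * HopfAlgebra.antipode (R := k) r =
        HopfAlgebra.antipode (R := k) r * τ (HopfAlgebra.antipode (R := k) (τ a)) := by
  intro a
  let u : Aˣ := GroupLike.toUnits k ⟨r, hrε, hr⟩
  obtain rfl : τ = (leftWinding χ).toLinearMap := LinearMap.ext hτ
  obtain rfl : Ad = (MulSemiringAction.toAlgHom k A (ConjAct.toConjAct u)).toLinearMap :=
    LinearMap.ext hAd
  have conj_eq : leftWinding χ (antipode k (leftWinding χ a)) = r * antipode k a * antipode k r :=
    tau_antipode_conjugation_general χ _ hcomm a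
  exact ⟨conj_eq, ((Units.inv_mul_eq_iff_eq_mul u).2 (conj_eq.trans (mul_assoc _ _ _))).symm⟩
end
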